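/- arXiv:2510.04343 — 2 statements merged into one kernel-verified Lean document; each statement's English description precedes it below -/
import Mathlib

section
/- Let μ > 0 and 0 < d < 2μ. Then lim_{m→∞} inf_{p ≥ 0} sup_{P^m ∈ P(μ,d)^m} (OPT(m,P^m) − BUND(p,P^m))/m exists and equals d/2. -/
/-!
Any distribution in the ambiguity set has `E min(X, μ) = μ - d/2`, because
`min x μ = (x + μ - |x - μ|) / 2`. Truncation turns this into a uniform law of large numbers: by
Chebyshev's inequality the bundle value is at least `m (μ - d/2 - δ)` with probability
`1 - O(1/(m δ²))`, uniformly over all products of marginals in the ambiguity set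
(`chebyshev_bundle`). Since no truthful mechanism extracts more than the total mean `m μ`
(`OPT_le`), the bundle price `m (μ - d/2 - δ)` has normalized regret at most `d/2 + δ + o(1)`.

For the lower bound, nature replies to the price `p` with one of the two-point laws `twoPoint μ d q`
with mass `q` at `μ + d/(2q)` and mass `1 - q` at `μ - d/(2(1-q))`.
* If `p ≤ m (μ - d/2)`, a fixed `q` suffices: bundling at `m (μ - δ)` earns almost `m μ`
  by the law of large numbers, while the price `p` earns at most `p` (`regret_low_price`).
* If `p > m (μ - d/2)`, let `q → 0`: selling separately at the high value earns at least `m d/2`,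
  while the bundle is only bought if some good has the high value, so that it earns at most
  `p m q` (`regret_high_price`).
-/

open MeasureTheory Filter Set
open scoped ENNReal

noncomputable section

/-- The mean-MAD ambiguity set: Borel probability measures on `[0,∞)` (modeled as
probability measures on `ℝ` giving zero mass to `(-∞,0)`) with mean `μ` and
mean absolute deviation `d`. -/
def MeanMAD (μ d : ℝ) : Set (ProbabilityMeasure ℝ) :=
  {P | (P : Measure ℝ) (Set.Iio 0) = 0 ∧
       Integrable (fun x => x) (P : Measure ℝ) ∧
       (∫ x, x ∂(P : Measure ℝ)) = μ ∧
       (∫ x, |x - μ| ∂(P : Measure ℝ)) = d}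

/-- A probability measure whose support consists of exactly two points. -/
def IsTwoPoint (P : ProbabilityMeasure ℝ) : Prop :=
  ∃ x y : ℝ, x ≠ y ∧ (P : Measure ℝ) ({x, y} : Set ℝ)ᶜ = 0 ∧
    (P : Measure ℝ) {x} ≠ 0 ∧ (P : Measure ℝ) {y} ≠ 0

/-- The subset of the mean-MAD ambiguity set consisting of two-point distributions. -/
def MeanMAD2 (μ d : ℝ) : Set (ProbabilityMeasure ℝ) :=
  {P ∈ MeanMAD μ d | IsTwoPoint P}

/-- A deterministic mechanism for selling `m` goods: a measurable allocation rule with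
values in `{0,1}^m` and a measurable nonnegative payment rule. -/
structure Mech (m : ℕ) where
  alloc : (Fin m → ℝ) → (Fin m → ℝ)
  price : (Fin m → ℝ) → ℝ
  alloc_meas : Measurable alloc
  price_meas : Measurable price
  alloc01 : ∀ v i, alloc v i = 0 ∨ alloc v i = 1
  price_nonneg : ∀ v, 0 ≤ price v

/-- Truthfulness: incentive compatibility and individual rationality on `[0,∞)^m`. -/
def Truthful {m : ℕ} (D : Mech m) : Prop :=
  (∀ v w : Fin m → ℝ, (∀ i, 0 ≤ v i) → (∀ i, 0 ≤ w i) →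
    (∑ i, D.alloc w i * v i) - D.price w ≤ (∑ i, D.alloc v i * v i) - D.price v) ∧
  (∀ v : Fin m → ℝ, (∀ i, 0 ≤ v i) → 0 ≤ (∑ i, D.alloc v i * v i) - D.price v)

/-- Expected revenue of a mechanism under a joint distribution of valuations. -/
def REV {m : ℕ} (D : Mech m) (Pm : Measure (Fin m → ℝ)) : ℝ :=
  ∫ v, D.price v ∂Pm

/-- Revenue of the bundling mechanism with price `p`. -/
def BUND {m : ℕ} (p : ℝ) (Pm : Measure (Fin m → ℝ)) : ℝ :=
  p * (Pm {v | p ≤ ∑ i, v i}).toReal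

/-- Optimal deterministic revenue for a known joint distribution. -/
def OPT (m : ℕ) (Pm : Measure (Fin m → ℝ)) : ℝ :=
  sSup {r | ∃ D : Mech m, Truthful D ∧ r = REV D Pm}

/-- The joint (product) measure of a family of independent marginals. -/
def jointMeasure {m : ℕ} (P : Fin m → ProbabilityMeasure ℝ) : Measure (Fin m → ℝ) :=
  Measure.pi (fun i => (P i : Measure ℝ))

/-- Maximin value over deterministic truthful mechanisms. -/
def maximinVal (A : Set (ProbabilityMeasure ℝ)) (m : ℕ) : ℝ :=
  sSup {r | ∃ D : Mech m, Truthful D ∧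
    r = sInf {s | ∃ P : Fin m → ProbabilityMeasure ℝ, (∀ i, P i ∈ A) ∧
      s = REV D (jointMeasure P) / m}}

/-- Minimax value over deterministic truthful mechanisms. -/
def minimaxVal (A : Set (ProbabilityMeasure ℝ)) (m : ℕ) : ℝ :=
  sInf {r | ∃ P : Fin m → ProbabilityMeasure ℝ, (∀ i, P i ∈ A) ∧
    r = sSup {s | ∃ D : Mech m, Truthful D ∧ s = REV D (jointMeasure P) / m}}

/-- Minimax value of the absolute regret objective for the bundling mechanism. -/
def regretVal (A : Set (ProbabilityMeasure ℝ)) (m : ℕ) : ℝ :=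
  sInf {r | ∃ p : ℝ, 0 ≤ p ∧
    r = sSup {s | ∃ P : Fin m → ProbabilityMeasure ℝ, (∀ i, P i ∈ A) ∧
      s = (OPT m (jointMeasure P) - BUND p (jointMeasure P)) / m}}

/-! ### Upper bounds on the optimal revenue -/

instance {m : ℕ} (P : Fin m → ProbabilityMeasure ℝ) : IsProbabilityMeasure (jointMeasure P) := by
  unfold jointMeasure; infer_instance

lemma ae_nonneg_of_Iio {P : ProbabilityMeasure ℝ} (h : (P : Measure ℝ) (Set.Iio 0) = 0) :
    ∀ᵐ x ∂(P : Measure ℝ), 0 ≤ x := by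
  rw [ae_iff]
  simpa [Set.Iio] using h

lemma ae_joint_of_ae {m : ℕ} {P : Fin m → ProbabilityMeasure ℝ} {p : ℝ → Prop}
    (h : ∀ i, ∀ᵐ x ∂(P i : Measure ℝ), p x) : ∀ᵐ v ∂(jointMeasure P), ∀ i, p (v i) := by
  rw [ae_all_iff]
  intro i
  exact (measurePreserving_eval (fun i => (P i : Measure ℝ)) i).quasiMeasurePreserving.ae (h i)

/-- Individual rationality caps the payment by the total value, hence the revenue by its mean. -/
lemma REV_le {μ d : ℝ} {m : ℕ} {P : Fin m → ProbabilityMeasure ℝ} (hP : ∀ i, P i ∈ MeanMAD μ d)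
    {D : Mech m} (hD : Truthful D) : REV D (jointMeasure P) ≤ m * μ := by
  have hint : ∀ i ∈ Finset.univ, Integrable (fun v : Fin m → ℝ => v i) (jointMeasure P) :=
    fun i _ => (measurePreserving_eval (fun i => (P i : Measure ℝ)) i).integrable_comp_of_integrable
      (hP i).2.1
  have hsum : ∫ v, ∑ i, v i ∂(jointMeasure P) = m * μ := by
    rw [integral_finsetSum _ hint]
    have : ∀ i, ∫ v : Fin m → ℝ, v i ∂(jointMeasure P) = μ := fun i => by
      unfold jointMeasure
      exact (integral_comp_eval (μ := fun i => (P i : Measure ℝ)) (i := i) (f := fun x : ℝ => x)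
        aestronglyMeasurable_id).trans (hP i).2.2.1
    simp [this]
  rw [← hsum]
  refine integral_mono_of_nonneg (Eventually.of_forall D.price_nonneg)
    (integrable_finsetSum _ hint) ?_
  filter_upwards [ae_joint_of_ae (fun i => ae_nonneg_of_Iio (hP i).1)] with v hv
  have h1 := hD.2 v hv
  have h2 : ∑ i, D.alloc v i * v i ≤ ∑ i, v i := by
    refine Finset.sum_le_sum fun i _ => ?_
    rcases D.alloc01 v i with h | h <;> simp [h, hv i]
  linarith

lemma le_OPT {μ d : ℝ} {m : ℕ} {P : Fin m → ProbabilityMeasure ℝ} (hP : ∀ i, P i ∈ MeanMAD μ d)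
    {D : Mech m} (hD : Truthful D) : REV D (jointMeasure P) ≤ OPT m (jointMeasure P) := by
  refine le_csSup ⟨m * μ, ?_⟩ ⟨D, hD, rfl⟩
  rintro r ⟨D, hD, rfl⟩
  exact REV_le hP hD

/-! ### Bundling and separate selling as mechanisms -/

lemma measurableSet_bundle {m : ℕ} (p : ℝ) : MeasurableSet {v : Fin m → ℝ | p ≤ ∑ i, v i} :=
  measurableSet_le measurable_const (by fun_prop)

open Classical in
/-- The mechanism offering the bundle of all goods at price `p`. -/
def bundleMech (m : ℕ) (p : ℝ) (hp : 0 ≤ p) : Mech m where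
  alloc v := if p ≤ ∑ i, v i then fun _ => 1 else fun _ => 0
  price v := if p ≤ ∑ i, v i then p else 0
  alloc_meas := Measurable.ite (measurableSet_bundle p) measurable_const measurable_const
  price_meas := Measurable.ite (measurableSet_bundle p) measurable_const measurable_const
  alloc01 v i := by by_cases h : p ≤ ∑ i, v i <;> simp [h]
  price_nonneg v := by split_ifs <;> simp [hp]

lemma bundleMech_truthful (m : ℕ) (p : ℝ) (hp : 0 ≤ p) : Truthful (bundleMech m p hp) := by
  constructor
  · intro v w _ _
    by_cases h : p ≤ ∑ i, v i <;> by_cases h' : p ≤ ∑ i, w i <;> simp [bundleMech, h, h'] <;>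
      linarith
  · intro v _
    by_cases h : p ≤ ∑ i, v i <;> simp [bundleMech, h]

lemma REV_bundleMech {m : ℕ} (p : ℝ) (hp : 0 ≤ p) (Pm : Measure (Fin m → ℝ)) :
    REV (bundleMech m p hp) Pm = BUND p Pm := by
  classical
  have : (bundleMech m p hp).price = {v : Fin m → ℝ | p ≤ ∑ i, v i}.indicator (fun _ => p) := by
    ext v
    simp [bundleMech, Set.indicator]
  rw [REV, this, integral_indicator_const _ (measurableSet_bundle p), BUND, smul_eq_mul, mul_comm]
  rfl

lemma OPT_le {μ d : ℝ} {m : ℕ} {P : Fin m → ProbabilityMeasure ℝ} (hP : ∀ i, P i ∈ MeanMAD μ d) :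
    OPT m (jointMeasure P) ≤ m * μ := by
  refine csSup_le ⟨_, bundleMech m 0 le_rfl, bundleMech_truthful m 0 le_rfl, rfl⟩ ?_
  rintro r ⟨D, hD, rfl⟩
  exact REV_le hP hD

lemma measurableSet_single {m : ℕ} (p : ℝ) (i : Fin m) :
    MeasurableSet {v : Fin m → ℝ | p ≤ v i} :=
  measurableSet_le measurable_const (by fun_prop)

open Classical in
/-- The mechanism offering every good separately at the common price `p`. -/
def separateMech (m : ℕ) (p : ℝ) (hp : 0 ≤ p) : Mech m where
  alloc v i := if p ≤ v i then 1 else 0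
  price v := ∑ i, if p ≤ v i then p else 0
  alloc_meas := measurable_pi_lambda _ fun i =>
    Measurable.ite (measurableSet_single p i) measurable_const measurable_const
  price_meas := Finset.measurable_sum _ fun i _ =>
    Measurable.ite (measurableSet_single p i) measurable_const measurable_const
  alloc01 v i := by by_cases h : p ≤ v i <;> simp [h]
  price_nonneg v := Finset.sum_nonneg fun i _ => by split_ifs <;> simp [hp]

lemma separateMech_truthful (m : ℕ) (p : ℝ) (hp : 0 ≤ p) : Truthful (separateMech m p hp) := by
  constructor
  · intro v w _ _
    simp only [separateMech, ← Finset.sum_sub_distrib]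
    refine Finset.sum_le_sum fun i _ => ?_
    by_cases h : p ≤ v i <;> by_cases h' : p ≤ w i <;> simp [h, h'] <;> linarith
  · intro v _
    simp only [separateMech, ← Finset.sum_sub_distrib]
    refine Finset.sum_nonneg fun i _ => ?_
    by_cases h : p ≤ v i <;> simp [h]

lemma REV_separateMech {m : ℕ} (p : ℝ) (hp : 0 ≤ p) (P : Fin m → ProbabilityMeasure ℝ) :
    REV (separateMech m p hp) (jointMeasure P)
      = ∑ i, p * ((P i : Measure ℝ) (Set.Ici p)).toReal := by
  classical
  have : (separateMech m p hp).price
      = fun v => ∑ i, (Set.Ici p).indicator (fun _ => p) (v i) := by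
    ext v
    simp [separateMech, Set.indicator]
  have hm : ∀ i, AEStronglyMeasurable ((Set.Ici p).indicator fun _ => p) (P i : Measure ℝ) :=
    fun i => (measurable_const.indicator measurableSet_Ici).aestronglyMeasurable
  rw [REV, this, integral_finsetSum]
  · refine Finset.sum_congr rfl fun i _ => ?_
    unfold jointMeasure
    rw [integral_comp_eval (hm i), integral_indicator_const _ measurableSet_Ici, smul_eq_mul,
      mul_comm]
    rfl
  · intro i _
    exact (measurePreserving_eval (fun i => (P i : Measure ℝ)) i).integrable_comp_of_integrable
      ((integrable_const p).indicator measurableSet_Ici)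

/-! ### Uniform law of large numbers -/

/-- Chebyshev's inequality for the sum of the valuations truncated at `K`, which is a lower bound
for the bundle value. The estimate depends on the marginals only through the truncated mean. -/
lemma chebyshev_bundle {m : ℕ} (hm : 0 < m) {P : Fin m → ProbabilityMeasure ℝ} {K a δ : ℝ}
    (hK : 0 ≤ K) (hδ : 0 < δ) (hP0 : ∀ i, (P i : Measure ℝ) (Set.Iio 0) = 0)
    (ha : ∀ i, ∫ x, min x K ∂(P i : Measure ℝ) = a) :
    1 - K ^ 2 / (m * δ ^ 2) ≤ (jointMeasure P {v | m * (a - δ) ≤ ∑ i, v i}).toReal := by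
  have hm' : (0 : ℝ) < m := by exact_mod_cast hm
  have hbd : ∀ i, ∀ᵐ x ∂(P i : Measure ℝ), min x K ∈ Set.Icc 0 K := fun i => by
    filter_upwards [ae_nonneg_of_Iio (hP0 i)] with x hx
    exact ⟨le_min hx hK, min_le_right _ _⟩
  have hmeas : Measurable (fun x : ℝ => min x K) := by fun_prop
  have hLp : ∀ i, MemLp (fun x : ℝ => min x K) 2 (P i : Measure ℝ) := fun i =>
    memLp_of_bounded (hbd i) hmeas.aestronglyMeasurable 2
  have hLp' : ∀ i, MemLp (fun v : Fin m → ℝ => min (v i) K) 2 (jointMeasure P) := fun i =>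
    (hLp i).comp_measurePreserving (measurePreserving_eval (fun i => (P i : Measure ℝ)) i)
  set S : (Fin m → ℝ) → ℝ := ∑ i, fun v => min (v i) K with hS
  have hSapp : ∀ v, S v = ∑ i, min (v i) K := fun v => by simp [hS]
  have hSLp : MemLp S 2 (jointMeasure P) := memLp_finsetSum' _ fun i _ => hLp' i
  have hmean : ∫ v, S v ∂(jointMeasure P) = m * a := by
    simp_rw [hSapp]
    rw [integral_finsetSum _ fun i _ => (hLp' i).integrable (by norm_num)]
    have : ∀ i, ∫ v : Fin m → ℝ, min (v i) K ∂(jointMeasure P) = a := fun i => by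
      unfold jointMeasure
      exact (integral_comp_eval (μ := fun i => (P i : Measure ℝ)) (i := i)
        (f := fun x : ℝ => min x K) hmeas.aestronglyMeasurable).trans (ha i)
    simp [this]
  have hvar : ProbabilityTheory.variance S (jointMeasure P) ≤ m * K ^ 2 := by
    have h1 : ProbabilityTheory.variance S (jointMeasure P)
        = ∑ i, ProbabilityTheory.variance (fun x : ℝ => min x K) (P i : Measure ℝ) :=
      ProbabilityTheory.variance_sum_pi (X := fun _ x => min x K) hLp
    rw [h1]
    calc _ ≤ ∑ _i : Fin m, K ^ 2 := by
          refine Finset.sum_le_sum fun i _ => ?_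
          refine (ProbabilityTheory.variance_le_sq_of_bounded (hbd i) hmeas.aemeasurable).trans ?_
          nlinarith [sq_nonneg K]
      _ = _ := by simp
  have hch := ProbabilityTheory.meas_ge_le_variance_div_sq hSLp (c := m * δ) (by positivity)
  rw [hmean] at hch
  have hsub : {v : Fin m → ℝ | m * (a - δ) ≤ ∑ i, v i}ᶜ ⊆ {v | m * δ ≤ |S v - m * a|} := by
    intro v hv
    simp only [Set.mem_compl_iff, Set.mem_ofPred_eq, not_le] at hv ⊢
    have : S v ≤ ∑ i, v i := by
      rw [hSapp]; exact Finset.sum_le_sum fun i _ => min_le_left _ _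
    rw [abs_sub_comm]
    refine le_trans ?_ (le_abs_self _)
    linarith
  have hc : (jointMeasure P).real {v : Fin m → ℝ | m * (a - δ) ≤ ∑ i, v i}ᶜ
      ≤ K ^ 2 / (m * δ ^ 2) := by
    refine ENNReal.toReal_le_of_le_ofReal (by positivity) ?_
    refine (measure_mono hsub).trans (hch.trans (ENNReal.ofReal_le_ofReal ?_))
    calc _ ≤ m * K ^ 2 / (m * δ) ^ 2 := by gcongr
      _ = _ := by field_simp
  rw [probReal_compl_eq_one_sub (measurableSet_bundle _)] at hc
  change _ ≤ (jointMeasure P).real _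
  linarith

lemma integral_min_mean {μ d : ℝ} {P : ProbabilityMeasure ℝ} (hP : P ∈ MeanMAD μ d) :
    ∫ x, min x μ ∂(P : Measure ℝ) = μ - d / 2 := by
  obtain ⟨_, hi, h1, h2⟩ := hP
  have : ∀ x : ℝ, min x μ = (1 / 2) * ((x + μ) - |x - μ|) := fun x => by
    rcases le_total x μ with h | h
    · rw [min_eq_left h, abs_of_nonpos (by linarith)]; ring
    · rw [min_eq_right h, abs_of_nonneg (by linarith)]; ring
  simp_rw [this]
  have i1 : Integrable (fun x : ℝ => x + μ) (P : Measure ℝ) := hi.add (integrable_const _)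
  have i2 : Integrable (fun x : ℝ => |x - μ|) (P : Measure ℝ) :=
    (hi.sub (integrable_const _)).abs
  rw [integral_const_mul, integral_sub i1 i2, integral_add hi (integrable_const _), h1, h2]
  simp
  ring

/-- Regret of the bundle price `m (μ - d/2 - δ)`. -/
lemma regret_upper {μ d δ : ℝ} (hμ : 0 < μ) (hδ : 0 < δ) (hδ' : δ ≤ μ - d / 2) (hd0 : 0 < d)
    {m : ℕ} (hm : 0 < m) {P : Fin m → ProbabilityMeasure ℝ} (hP : ∀ i, P i ∈ MeanMAD μ d) :
    (OPT m (jointMeasure P) - BUND (m * (μ - d / 2 - δ)) (jointMeasure P)) / m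
      ≤ d / 2 + δ + μ * (μ ^ 2 / (m * δ ^ 2)) := by
  have hm' : (0 : ℝ) < m := by exact_mod_cast hm
  have h := chebyshev_bundle hm hμ.le hδ (fun i => (hP i).1) (fun i => integral_min_mean (hP i))
  have hO := OPT_le hP
  rw [div_le_iff₀ hm', BUND]
  set t := μ ^ 2 / (m * δ ^ 2) with ht
  have ht0 : 0 ≤ t := by positivity
  have h1 : m * (μ - d / 2 - δ) * (1 - t) ≤ m * (μ - d / 2 - δ) *
      (jointMeasure P {v | m * (μ - d / 2 - δ) ≤ ∑ i, v i}).toReal :=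
    mul_le_mul_of_nonneg_left h (mul_nonneg hm'.le (by linarith))
  nlinarith [mul_nonneg (mul_nonneg hm'.le (by linarith : 0 ≤ d / 2 + δ)) ht0]

/-! ### The two-point laws -/

/-- The weighted sum of point masses underlying `twoPoint`. -/
def twoPointMeasure (μ d q : ℝ) : Measure ℝ :=
  ENNReal.ofReal q • Measure.dirac (μ + d / (2 * q)) +
    ENNReal.ofReal (1 - q) • Measure.dirac (μ - d / (2 * (1 - q)))

lemma twoPointMeasure_isProb (μ d : ℝ) {q : ℝ} (h0 : 0 < q) (h1 : q < 1) :
    IsProbabilityMeasure (twoPointMeasure μ d q) := by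
  constructor
  simp only [twoPointMeasure, Measure.add_apply, Measure.smul_apply, measure_univ, smul_eq_mul,
    mul_one]
  rw [← ENNReal.ofReal_add h0.le (by linarith)]
  simp

/-- The law with mass `q` at `μ + d/(2q)` and mass `1 - q` at `μ - d/(2(1-q))`; these two values
are forced by mean `μ` and mean absolute deviation `d`. -/
def twoPoint (μ d q : ℝ) (h0 : 0 < q) (h1 : q < 1) : ProbabilityMeasure ℝ :=
  ⟨twoPointMeasure μ d q, twoPointMeasure_isProb μ d h0 h1⟩

lemma integrable_twoPoint (μ d q : ℝ) (f : ℝ → ℝ) : Integrable f (twoPointMeasure μ d q) :=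
  ((integrable_dirac (by simp)).smul_measure ENNReal.ofReal_ne_top).add_measure
    ((integrable_dirac (by simp)).smul_measure ENNReal.ofReal_ne_top)

lemma integral_twoPoint (μ d : ℝ) {q : ℝ} (h0 : 0 < q) (h1 : q < 1) (f : ℝ → ℝ) :
    ∫ x, f x ∂(twoPointMeasure μ d q)
      = q * f (μ + d / (2 * q)) + (1 - q) * f (μ - d / (2 * (1 - q))) := by
  rw [twoPointMeasure, integral_add_measure
    ((integrable_dirac (by simp)).smul_measure ENNReal.ofReal_ne_top)
    ((integrable_dirac (by simp)).smul_measure ENNReal.ofReal_ne_top),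
    integral_smul_measure, integral_smul_measure, integral_dirac, integral_dirac,
    ENNReal.toReal_ofReal h0.le, ENNReal.toReal_ofReal (by linarith), smul_eq_mul, smul_eq_mul]

/-- The condition `q ≤ 1 - d/(2μ)` says that the low value is nonnegative. -/
lemma twoPoint_mem {μ d q : ℝ} (hμ : 0 < μ) (hd0 : 0 < d) (h0 : 0 < q) (h1 : q < 1)
    (hq : q ≤ 1 - d / (2 * μ)) : twoPoint μ d q h0 h1 ∈ MeanMAD μ d := by
  have h1' : 0 < 1 - q := by linarith
  have hlow : 0 ≤ μ - d / (2 * (1 - q)) := by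
    have : d / (2 * μ) ≤ 1 - q := by linarith
    rw [div_le_iff₀ (by positivity)] at this
    rw [sub_nonneg, div_le_iff₀ (by positivity)]
    linarith
  have hhigh : 0 ≤ μ + d / (2 * q) := by positivity
  refine ⟨?_, integrable_twoPoint _ _ _ _, ?_, ?_⟩
  · change twoPointMeasure μ d q (Set.Iio 0) = 0
    simp [twoPointMeasure, Set.indicator, hlow.not_gt, hhigh.not_gt, -sub_neg]
  · change ∫ x, x ∂(twoPointMeasure μ d q) = μ
    rw [integral_twoPoint μ d h0 h1]
    field_simp
    ring
  · change ∫ x, |x - μ| ∂(twoPointMeasure μ d q) = d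
    rw [integral_twoPoint μ d h0 h1 (fun x => |x - μ|)]
    have e1 : |μ + d / (2 * q) - μ| = d / (2 * q) := by
      rw [abs_of_nonneg] <;> ring_nf; positivity
    have e2 : |μ - d / (2 * (1 - q)) - μ| = d / (2 * (1 - q)) := by
      rw [abs_sub_comm, abs_of_nonneg]
      · ring
      · have : 0 ≤ d / (2 * (1 - q)) := by positivity
        linarith
    simp only [e1, e2]
    field_simp
    ring

/-! ### Lower bounds on the regret -/

/-- For a price above `m (μ - d/2)`, rare but huge valuations make separate selling worth `d/2`
per good, while the bundle sells with probability at most `m q`. -/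
lemma regret_high_price {μ d q p : ℝ} (hμ : 0 < μ) (hd0 : 0 < d) (h0 : 0 < q) (h1 : q < 1)
    (hq : q ≤ 1 - d / (2 * μ)) {m : ℕ} (hm : 0 < m) (hp0 : 0 ≤ p) (hp : m * (μ - d / 2) < p) :
    d / 2 + q * (μ - p) ≤ (OPT m (jointMeasure fun _ => twoPoint μ d q h0 h1)
      - BUND p (jointMeasure (m := m) fun _ => twoPoint μ d q h0 h1)) / m := by
  have hm' : (0 : ℝ) < m := by exact_mod_cast hm
  have h1' : 0 < 1 - q := by linarith
  have hmem := twoPoint_mem hμ hd0 h0 h1 hq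
  set H := μ + d / (2 * q) with hH
  set L := μ - d / (2 * (1 - q)) with hL
  have hH0 : 0 ≤ H := by positivity
  have hLl : L ≤ μ - d / 2 := by
    have : d / 2 ≤ d / (2 * (1 - q)) := by
      apply div_le_div_of_nonneg_left hd0.le (by positivity); linarith
    linarith
  have hLH : L < H := by
    have : 0 < d / (2 * q) := by positivity
    linarith
  have hsep := le_OPT (m := m) (P := fun _ => twoPoint μ d q h0 h1) (fun _ => hmem)
    (separateMech_truthful m H hH0)
  rw [REV_separateMech] at hsep
  have hIci : ((twoPoint μ d q h0 h1 : Measure ℝ) (Set.Ici H)) = ENNReal.ofReal q := by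
    change twoPointMeasure μ d q (Set.Ici H) = _
    simp [twoPointMeasure, Set.indicator, ← hH, ← hL, hLH]
  have hIoi : ((twoPoint μ d q h0 h1 : Measure ℝ) (Set.Ioi L)) = ENNReal.ofReal q := by
    change twoPointMeasure μ d q (Set.Ioi L) = _
    simp [twoPointMeasure, Set.indicator, ← hH, ← hL, hLH]
  simp only [hIci, Finset.sum_const, Finset.card_univ, Fintype.card_fin, nsmul_eq_mul,
    ENNReal.toReal_ofReal h0.le] at hsep
  have hprob : (jointMeasure (m := m) (fun _ => twoPoint μ d q h0 h1)
      {v | p ≤ ∑ i, v i}).toReal ≤ m * q := by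
    refine ENNReal.toReal_le_of_le_ofReal (by positivity) ?_
    have hsub : {v : Fin m → ℝ | p ≤ ∑ i, v i} ⊆ ⋃ i, (fun v : Fin m → ℝ => v i) ⁻¹' Set.Ioi L := by
      intro v hv
      by_contra hcon
      simp only [Set.mem_iUnion, Set.mem_preimage, Set.mem_Ioi, not_exists, not_lt] at hcon
      have : ∑ i, v i ≤ ∑ _i : Fin m, L := Finset.sum_le_sum fun i _ => hcon i
      simp only [Finset.sum_const, Finset.card_univ, Fintype.card_fin, nsmul_eq_mul] at this
      have h3 : m * L ≤ m * (μ - d / 2) := mul_le_mul_of_nonneg_left hLl hm'.le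
      have h4 : p ≤ ∑ i, v i := hv
      linarith
    refine (measure_mono hsub).trans ((measure_iUnion_le _).trans ?_)
    have : ∀ i : Fin m, jointMeasure (fun _ => twoPoint μ d q h0 h1)
        ((fun v : Fin m → ℝ => v i) ⁻¹' Set.Ioi L) = ENNReal.ofReal q := fun i => by
      rw [← hIoi]
      exact (measurePreserving_eval (fun _ : Fin m => (twoPoint μ d q h0 h1 : Measure ℝ))
        i).measure_preimage measurableSet_Ioi.nullMeasurableSet
    simp only [this, tsum_fintype, Finset.sum_const, Finset.card_univ, Fintype.card_fin,
      nsmul_eq_mul]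
    rw [ENNReal.ofReal_mul hm'.le, ENNReal.ofReal_natCast]
  rw [le_div_iff₀ hm', BUND]
  have h5 := mul_le_mul_of_nonneg_left hprob hp0
  have h6 : H * q = μ * q + d / 2 := by
    rw [hH]; field_simp
  have h7 : (m : ℝ) * (H * q) = m * (μ * q + d / 2) := by rw [h6]
  linarith

/-- For a price up to `m (μ - d/2)`, a fixed bounded law already costs about `d/2` per good,
because bundling at `m (μ - δ)` earns nearly the full mean. -/
lemma regret_low_price {μ d q p δ : ℝ} (hμ : 0 < μ) (hd0 : 0 < d) (h0 : 0 < q) (h1 : q < 1)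
    (hq : q ≤ 1 - d / (2 * μ)) {m : ℕ} (hm : 0 < m) (hp0 : 0 ≤ p) (hp : p ≤ m * (μ - d / 2))
    (hδ : 0 < δ) (hδ' : δ ≤ μ) :
    d / 2 - δ - μ * ((μ + d / (2 * q)) ^ 2 / (m * δ ^ 2)) ≤
      (OPT m (jointMeasure fun _ => twoPoint μ d q h0 h1)
      - BUND p (jointMeasure (m := m) fun _ => twoPoint μ d q h0 h1)) / m := by
  have hm' : (0 : ℝ) < m := by exact_mod_cast hm
  have h1' : 0 < 1 - q := by linarith
  have hmem := twoPoint_mem hμ hd0 h0 h1 hq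
  set H := μ + d / (2 * q) with hH
  have hH0 : 0 ≤ H := by positivity
  have hLH : μ - d / (2 * (1 - q)) ≤ H := by
    have : 0 < d / (2 * q) := by positivity
    have : 0 < d / (2 * (1 - q)) := by positivity
    linarith
  -- Truncation at the high value does not change the mean.
  have hmin : ∫ x, min x H ∂(twoPoint μ d q h0 h1 : Measure ℝ) = μ := by
    change ∫ x, min x H ∂(twoPointMeasure μ d q) = μ
    rw [integral_twoPoint μ d h0 h1 (fun x => min x H)]
    simp only [← hH, min_self, min_eq_left hLH]
    rw [hH]
    field_simp
    ring
  have hch := chebyshev_bundle hm (P := fun _ => twoPoint μ d q h0 h1) hH0 hδ (fun _ => hmem.1)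
    (fun _ => hmin)
  have hpr : 0 ≤ m * (μ - δ) := mul_nonneg hm'.le (by linarith)
  have hopt := le_OPT (m := m) (P := fun _ => twoPoint μ d q h0 h1) (fun _ => hmem)
    (bundleMech_truthful m _ hpr)
  rw [REV_bundleMech, BUND] at hopt
  have hone : (jointMeasure (m := m) (fun _ => twoPoint μ d q h0 h1)
      {v | p ≤ ∑ i, v i}).toReal ≤ 1 := measureReal_le_one
  rw [le_div_iff₀ hm', BUND]
  have h5 := mul_le_mul_of_nonneg_left hone hp0
  have h6 := mul_le_mul_of_nonneg_left hch hpr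
  set t := H ^ 2 / (m * δ ^ 2) with ht
  have ht0 : 0 ≤ t := by positivity
  nlinarith [mul_nonneg (mul_nonneg hm'.le hδ.le) ht0]

/-- Theorem 5 (absolute regret objective): the robust normalized regret of the optimal
bundling price converges to `d/2`. -/
theorem regret_tendsto (μ d : ℝ) (hμ : 0 < μ) (hd0 : 0 < d) (hd : d < 2 * μ) :
    Tendsto (fun m : ℕ => regretVal (MeanMAD μ d) m) atTop (nhds (d / 2)) := by
  have hd2 : d / (2 * μ) < 1 := by rw [div_lt_one (by positivity)]; exact hd
  have hd2' : 0 < d / (2 * μ) := by positivity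
  -- The choice of `q` for small prices puts the low value at `0`.
  set q₀ := 1 - d / (2 * μ) with hq₀
  have hq0 : 0 < q₀ := by linarith
  have hq1 : q₀ < 1 := by linarith
  set H := μ + d / (2 * q₀) with hH
  -- Regrets against a fixed price are at most `μ`, so that suprema over laws are not junk.
  have hbdd : ∀ (m : ℕ), 0 < m → ∀ p : ℝ, 0 ≤ p →
      BddAbove {s | ∃ P : Fin m → ProbabilityMeasure ℝ, (∀ i, P i ∈ MeanMAD μ d) ∧
        s = (OPT m (jointMeasure P) - BUND p (jointMeasure P)) / m} := by
    intro m hm p hp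
    have hm' : (0 : ℝ) < m := by exact_mod_cast hm
    refine ⟨μ, ?_⟩
    rintro s ⟨P, hP, rfl⟩
    rw [div_le_iff₀ hm']
    have h1 := OPT_le hP
    have h2 : 0 ≤ BUND p (jointMeasure P) := mul_nonneg hp ENNReal.toReal_nonneg
    linarith
  have hlim : ∀ C : ℝ, Tendsto (fun m : ℕ => C / (m : ℝ)) atTop (nhds 0) := fun C =>
    tendsto_const_div_atTop_nhds_zero_nat C
  rw [Metric.tendsto_atTop']
  intro ε hε
  set δ := min (ε / 4) (μ - d / 2) with hδdef
  have hδ : 0 < δ := lt_min (by linarith) (by linarith)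
  have hδε : δ ≤ ε / 4 := min_le_left _ _
  have hδμ : δ ≤ μ - d / 2 := min_le_right _ _
  have hev : ∀ᶠ m : ℕ in atTop, μ * (μ ^ 2 / (m * δ ^ 2)) < ε / 4 ∧
      μ * (H ^ 2 / (m * δ ^ 2)) < ε / 4 ∧ 0 < m := by
    have e1 := (hlim (μ * (μ ^ 2 / δ ^ 2))).eventually_lt_const (by linarith : 0 < ε / 4)
    have e2 := (hlim (μ * (H ^ 2 / δ ^ 2))).eventually_lt_const (by linarith : 0 < ε / 4)
    filter_upwards [e1, e2, eventually_gt_atTop 0] with m h1 h2 h3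
    have hm' : (0 : ℝ) < m := by exact_mod_cast h3
    refine ⟨?_, ?_, h3⟩
    · have e : μ * (μ ^ 2 / (m * δ ^ 2)) = μ * (μ ^ 2 / δ ^ 2) / m := by field_simp
      rwa [e]
    · have e : μ * (H ^ 2 / (m * δ ^ 2)) = μ * (H ^ 2 / δ ^ 2) / m := by field_simp
      rwa [e]
  obtain ⟨N, hN⟩ := eventually_atTop.1 hev
  refine ⟨N, fun m hmN => ?_⟩
  obtain ⟨hA, hB, hm⟩ := hN m hmN.le
  have hm' : (0 : ℝ) < m := by exact_mod_cast hm
  have hlow : ∀ r ∈ {r | ∃ p : ℝ, 0 ≤ p ∧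
      r = sSup {s | ∃ P : Fin m → ProbabilityMeasure ℝ, (∀ i, P i ∈ MeanMAD μ d) ∧
        s = (OPT m (jointMeasure P) - BUND p (jointMeasure P)) / m}}, d / 2 - ε / 2 ≤ r := by
    rintro r ⟨p, hp0, rfl⟩
    rcases le_or_gt p (m * (μ - d / 2)) with hp | hp
    · have h := regret_low_price hμ hd0 hq0 hq1 le_rfl hm hp0 hp hδ (by linarith)
      refine le_trans ?_ (le_csSup (hbdd m hm p hp0)
        ⟨fun _ => twoPoint μ d q₀ hq0 hq1, fun _ => twoPoint_mem hμ hd0 hq0 hq1 le_rfl, rfl⟩)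
      linarith
    · -- This `q` makes the earnings `q p` of the bundle at most `ε / 2`.
      set q := min q₀ (ε / 2 / (p + 1)) with hq
      have h0 : 0 < q := lt_min hq0 (by positivity)
      have h1 : q < 1 := (min_le_left _ _).trans_lt hq1
      have hqq : q ≤ q₀ := min_le_left _ _
      have h := regret_high_price hμ hd0 h0 h1 hqq hm hp0 hp
      refine le_trans ?_ (le_csSup (hbdd m hm p hp0)
        ⟨fun _ => twoPoint μ d q h0 h1, fun _ => twoPoint_mem hμ hd0 h0 h1 hqq, rfl⟩)
      have h2 : q * (p + 1) ≤ ε / 2 := (le_div_iff₀ (by positivity)).1 (min_le_right _ _)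
      have h3 : 0 < q * μ := by positivity
      refine le_trans ?_ h
      linarith
  have hp0 : 0 ≤ (m : ℝ) * (μ - d / 2 - δ) := mul_nonneg hm'.le (by linarith)
  have hlo : d / 2 - ε / 2 ≤ regretVal (MeanMAD μ d) m := le_csInf ⟨_, _, hp0, rfl⟩ hlow
  have hup : regretVal (MeanMAD μ d) m ≤ d / 2 + ε / 2 := by
    refine (csInf_le ⟨_, hlow⟩ ⟨_, hp0, rfl⟩).trans (csSup_le
      ⟨_, fun _ => twoPoint μ d q₀ hq0 hq1, fun _ => twoPoint_mem hμ hd0 hq0 hq1 le_rfl, rfl⟩ ?_)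
    rintro s ⟨P, hP, rfl⟩
    have := regret_upper hμ hδ hδμ hd0 hm hP
    linarith
  rw [Real.dist_eq, abs_lt]
  constructor <;> linarith

end
end

section
/- Let μ > 0 and 0 < d < 2μ. Then limsup_{m→∞} sup_{p ≥ 0} inf_{P^m ∈ P₂(μ,d)^m} BUND(p,P^m)/OPT(m,P^m) ≤ 1 − d/(2μ). -/
/-!
The bound already holds for every fixed `m ≥ 1`. For each bundle price `p` one two-point law,
used i.i.d. for all goods, makes the ratio at most `1 - d/(2μ)`.

The two-point laws with mean `μ` and mean absolute deviation `d` put mass `β` on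
`y = μ + d/(2β)` and mass `1 - β` on `x = μ - d/(2(1-β))`; the constraint `x ≥ 0` reads
`β ≤ 1 - d/(2μ)` (`adversary_mem`). Selling every good separately at price `y` earns
`m y β = m (μ β + d/2)`, which bounds the optimum from below (`le_OPT_adversary`).

* If `p ≤ m (μ - d/2)`, take `β = 1 - d/(2μ)`. Then `x = 0`, separate selling extracts the whole
  surplus `m μ`, and bundling earns at most `p`.
* If `p > m (μ - d/2)`, take `β` small. Since `x < μ - d/2`, a sale of the bundle requires some
  good to have the high value, which happens with probability at most `m β`. So bundling earns at
  most `p m β`, while the optimum is at least `m d/2`.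
-/


open MeasureTheory Filter Set
open scoped ENNReal

noncomputable section

/-- Maximin value of the ratio objective for the bundling mechanism. -/
def ratioVal (A : Set (ProbabilityMeasure ℝ)) (m : ℕ) : ℝ :=
  sSup {r | ∃ p : ℝ, 0 ≤ p ∧
    r = sInf {s | ∃ P : Fin m → ProbabilityMeasure ℝ, (∀ i, P i ∈ A) ∧
      s = BUND p (jointMeasure P) / OPT m (jointMeasure P)}}

/-! ### The adversarial two-point laws -/

/-- The law with mass `β` on `y` and mass `1 - β` on `x`, where `β ∈ [0,1]`. -/
def twoPt (x y β : ℝ) (h0 : 0 ≤ β) (h1 : β ≤ 1) : ProbabilityMeasure ℝ :=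
  ⟨ENNReal.ofReal (1 - β) • Measure.dirac x + ENNReal.ofReal β • Measure.dirac y, by
    constructor
    simp only [Measure.add_apply, Measure.smul_apply, measure_univ, smul_eq_mul, mul_one]
    rw [← ENNReal.ofReal_add (by linarith) h0]
    simp⟩

lemma coe_twoPt (x y β : ℝ) (h0 : 0 ≤ β) (h1 : β ≤ 1) :
    ((twoPt x y β h0 h1 : ProbabilityMeasure ℝ) : Measure ℝ) =
      ENNReal.ofReal (1 - β) • Measure.dirac x + ENNReal.ofReal β • Measure.dirac y := rfl

lemma integrable_twoPt (x y β : ℝ) (h0 : 0 ≤ β) (h1 : β ≤ 1) (f : ℝ → ℝ) :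
    Integrable f (twoPt x y β h0 h1 : Measure ℝ) := by
  rw [coe_twoPt]
  exact ((integrable_dirac (by simp)).smul_measure ENNReal.ofReal_ne_top).add_measure
    ((integrable_dirac (by simp)).smul_measure ENNReal.ofReal_ne_top)

lemma integral_twoPt (x y β : ℝ) (h0 : 0 ≤ β) (h1 : β ≤ 1) (f : ℝ → ℝ) :
    ∫ t, f t ∂(twoPt x y β h0 h1 : Measure ℝ) = (1 - β) * f x + β * f y := by
  rw [coe_twoPt, integral_add_measure
    ((integrable_dirac (by simp)).smul_measure ENNReal.ofReal_ne_top)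
    ((integrable_dirac (by simp)).smul_measure ENNReal.ofReal_ne_top)]
  simp [integral_smul_measure, ENNReal.toReal_ofReal h0,
    ENNReal.toReal_ofReal (sub_nonneg.2 h1)]

/-- The two-point law of the ambiguity set whose upper atom has mass `β`. -/
def adversary (μ d β : ℝ) (h0 : 0 ≤ β) (h1 : β ≤ 1) : ProbabilityMeasure ℝ :=
  twoPt (μ - d / (2 * (1 - β))) (μ + d / (2 * β)) β h0 h1

lemma adversary_mem {μ d β : ℝ} (hd0 : 0 < d) (h0 : 0 < β) (h1 : β < 1)
    (hβ : d ≤ 2 * μ * (1 - β)) :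
    adversary μ d β h0.le h1.le ∈ MeanMAD2 μ d := by
  have h1' : 0 < 1 - β := by linarith
  have hx : 0 ≤ μ - d / (2 * (1 - β)) := by
    rw [sub_nonneg, div_le_iff₀ (by positivity)]; linarith
  have hy : 0 < d / (2 * β) := by positivity
  have hx' : 0 < d / (2 * (1 - β)) := by positivity
  refine ⟨⟨?_, integrable_twoPt _ _ _ _ _ _, ?_, ?_⟩,
    μ - d / (2 * (1 - β)), μ + d / (2 * β), by linarith, ?_, ?_, ?_⟩
  · have hy' : 0 ≤ μ + d / (2 * β) := by linarith
    rw [adversary, coe_twoPt]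
    simp [measurableSet_Iio, sub_nonneg.1 hx, hy']
  · rw [adversary, integral_twoPt]
    field_simp
    ring
  · rw [adversary, integral_twoPt]
    have e1 : |μ - d / (2 * (1 - β)) - μ| = d / (2 * (1 - β)) := by
      rw [abs_of_nonpos] <;> linarith
    have e2 : |μ + d / (2 * β) - μ| = d / (2 * β) := by
      rw [abs_of_nonneg] <;> linarith
    rw [e1, e2]
    field_simp
    ring
  · rw [adversary, coe_twoPt]
    simp
  · rw [adversary, coe_twoPt]
    simp [h1]
  · rw [adversary, coe_twoPt]
    simp [h0]

/-! ### Bounds on the optimal revenue -/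

/-- By individual rationality no truthful mechanism earns more than the expected total value.
This makes the supremum defining `OPT` a genuine one. -/
lemma bddAbove_REV {μ d : ℝ} {m : ℕ} (P : Fin m → ProbabilityMeasure ℝ)
    (hP : ∀ i, P i ∈ MeanMAD μ d) :
    BddAbove {r | ∃ D : Mech m, Truthful D ∧ r = REV D (jointMeasure P)} := by
  refine ⟨∫ v, ∑ i, v i ∂(jointMeasure P), ?_⟩
  rintro r ⟨D, hD, rfl⟩
  refine integral_mono_of_nonneg (ae_of_all _ D.price_nonneg)
    (integrable_finsetSum _ fun i _ => integrable_comp_eval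
      (X := fun _ => ℝ) (μ := fun i => (P i : Measure ℝ)) (i := i) (f := fun z => z) (hP i).2.1) ?_
  have hnn : ∀ᵐ v ∂(jointMeasure P), ∀ i, 0 ≤ v i := by
    refine ae_all_iff.2 fun i => ?_
    have h : ∀ᵐ x ∂(P i : Measure ℝ), 0 ≤ x := by
      rw [ae_iff]
      simpa [Set.Iio] using (hP i).1
    exact (measurePreserving_eval (fun i => (P i : Measure ℝ)) i).quasiMeasurePreserving.ae h
  filter_upwards [hnn] with v hv
  have h1 := hD.2 v hv
  have h2 : ∑ i, D.alloc v i * v i ≤ ∑ i, v i := by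
    refine Finset.sum_le_sum fun i _ => ?_
    rcases D.alloc01 v i with h | h <;> simp [h, hv i]
  show D.price v ≤ ∑ i, v i
  linarith

lemma OPT_nonneg {m : ℕ} (Q : Measure (Fin m → ℝ)) : 0 ≤ OPT m Q := by
  refine Real.sSup_nonneg ?_
  rintro r ⟨D, -, rfl⟩
  exact integral_nonneg D.price_nonneg

/-- The mechanism selling every good separately at the posted price `t`. -/
def posted (m : ℕ) (t : ℝ) (ht : 0 ≤ t) : Mech m where
  alloc v i := if t ≤ v i then 1 else 0
  price v := ∑ i, if t ≤ v i then t else 0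
  alloc_meas := measurable_pi_lambda _ fun i =>
    Measurable.ite (measurableSet_le measurable_const (measurable_pi_apply i))
      measurable_const measurable_const
  price_meas := Finset.measurable_sum _ fun i _ =>
    Measurable.ite (measurableSet_le measurable_const (measurable_pi_apply i))
      measurable_const measurable_const
  alloc01 v i := by
    by_cases h : t ≤ v i <;> simp [h]
  price_nonneg v := Finset.sum_nonneg fun i _ => by split_ifs <;> simp [ht]

lemma posted_truthful (m : ℕ) (t : ℝ) (ht : 0 ≤ t) : Truthful (posted m t ht) := by
  constructor
  · intro v w _ _
    simp only [posted]
    rw [← Finset.sum_sub_distrib, ← Finset.sum_sub_distrib]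
    refine Finset.sum_le_sum fun i _ => ?_
    split_ifs <;> linarith
  · intro v _
    simp only [posted]
    rw [← Finset.sum_sub_distrib]
    refine Finset.sum_nonneg fun i _ => ?_
    split_ifs <;> linarith

/-- Separate selling at the upper atom `y` earns `m y β = m (μ β + d/2)`. -/
lemma le_OPT_adversary {μ d β : ℝ} (hμ : 0 < μ) (hd0 : 0 < d) (h0 : 0 < β) (h1 : β < 1)
    (hβ : d ≤ 2 * μ * (1 - β)) (m : ℕ) :
    m * (μ * β + d / 2) ≤
      OPT m (jointMeasure fun _ : Fin m => adversary μ d β h0.le h1.le) := by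
  have h1' : 0 < 1 - β := by linarith
  have hx' : 0 < d / (2 * (1 - β)) := by positivity
  have hy : 0 < d / (2 * β) := by positivity
  have ht : 0 ≤ μ + d / (2 * β) := by positivity
  refine le_csSup (bddAbove_REV _ fun _ => (adversary_mem hd0 h0 h1 hβ).1)
    ⟨posted m (μ + d / (2 * β)) ht, posted_truthful _ _ _, ?_⟩
  simp only [REV, posted, jointMeasure]
  have hmeas : Measurable fun z : ℝ =>
      if μ + d / (2 * β) ≤ z then μ + d / (2 * β) else 0 :=
    Measurable.ite measurableSet_Ici measurable_const measurable_const
  rw [integral_finsetSum _ fun i _ => integrable_comp_eval (i := i)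
    (X := fun _ => ℝ) (μ := fun _ => (adversary μ d β h0.le h1.le : Measure ℝ))
    (f := fun z : ℝ => if μ + d / (2 * β) ≤ z then μ + d / (2 * β) else 0)
    (integrable_twoPt _ _ _ _ _ _)]
  have key : ∀ i : Fin m, ∫ v : Fin m → ℝ,
      (if μ + d / (2 * β) ≤ v i then μ + d / (2 * β) else 0)
        ∂(Measure.pi fun _ : Fin m => (adversary μ d β h0.le h1.le : Measure ℝ)) =
      μ * β + d / 2 := by
    intro i
    rw [integral_comp_eval (i := i)
      (X := fun _ => ℝ) (μ := fun _ => (adversary μ d β h0.le h1.le : Measure ℝ))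
      (f := fun z : ℝ => if μ + d / (2 * β) ≤ z then μ + d / (2 * β) else 0)
      hmeas.aestronglyMeasurable, adversary, integral_twoPt,
      if_neg (by linarith), if_pos le_rfl]
    field_simp
    ring
  rw [Finset.sum_congr rfl fun i _ => key i]
  simp [mul_add]

/-! ### Bounds on the bundling revenue -/

lemma BUND_le_price {m : ℕ} {p : ℝ} (hp : 0 ≤ p) (P : Fin m → ProbabilityMeasure ℝ) :
    BUND p (jointMeasure P) ≤ p := by
  have : IsProbabilityMeasure (jointMeasure P) := by
    unfold jointMeasure; infer_instance
  exact mul_le_of_le_one_right hp (measureReal_le_one (μ := jointMeasure P))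

/-- If the bundle price exceeds `m (μ - d/2)`, which is at least `m` times the lower atom,
a sale needs a good with the high value; the union bound applies. -/
lemma BUND_adversary_le {μ d β : ℝ} (hd0 : 0 < d) (h0 : 0 < β) (h1 : β < 1) {m : ℕ} {p : ℝ}
    (hp0 : 0 ≤ p) (hp : m * (μ - d / 2) < p) :
    BUND p (jointMeasure fun _ : Fin m => adversary μ d β h0.le h1.le) ≤ p * (m * β) := by
  have h1' : 0 < 1 - β := by linarith
  refine mul_le_mul_of_nonneg_left ?_ hp0
  refine ENNReal.toReal_le_of_le_ofReal (by positivity) ?_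
  set x : ℝ := μ - d / (2 * (1 - β)) with hx
  have hxle : x ≤ μ - d / 2 := by
    have : d / 2 ≤ d / (2 * (1 - β)) :=
      div_le_div_of_nonneg_left hd0.le (by positivity) (by linarith)
    linarith
  have hsub : {v : Fin m → ℝ | p ≤ ∑ i, v i} ⊆ ⋃ i, Function.eval i ⁻¹' {x}ᶜ := by
    intro v hv
    by_contra hcon
    simp only [mem_iUnion, mem_preimage, mem_compl_iff, mem_singleton_iff, not_exists,
      not_not, Function.eval] at hcon
    have hv' : p ≤ ∑ i, v i := hv
    rw [Finset.sum_congr rfl fun i _ => hcon i] at hv'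
    simp only [Finset.sum_const, Finset.card_univ, Fintype.card_fin, nsmul_eq_mul] at hv'
    have := mul_le_mul_of_nonneg_left hxle (Nat.cast_nonneg (α := ℝ) m)
    linarith
  have hone : ∀ i : Fin m, jointMeasure (fun _ : Fin m => adversary μ d β h0.le h1.le)
      (Function.eval i ⁻¹' {x}ᶜ) ≤ ENNReal.ofReal β := by
    intro i
    rw [jointMeasure, (measurePreserving_eval
      (fun _ : Fin m => (adversary μ d β h0.le h1.le : Measure ℝ)) i).measure_preimage
      (measurableSet_singleton x).compl.nullMeasurableSet, adversary, coe_twoPt, ← hx]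
    simp only [Measure.add_apply, Measure.smul_apply, smul_eq_mul]
    have e : Measure.dirac x ({x}ᶜ : Set ℝ) = 0 := by simp
    rw [e, mul_zero, zero_add]
    exact mul_le_of_le_one_right (by simp) prob_le_one
  calc _ ≤ _ := measure_mono hsub
    _ ≤ ∑ i : Fin m, _ := measure_iUnion_fintype_le _ _
    _ ≤ ∑ _i : Fin m, ENNReal.ofReal β := Finset.sum_le_sum fun i _ => hone i
    _ = ENNReal.ofReal (m * β) := by
      rw [ENNReal.ofReal_mul (by positivity)]; simp

/-! ### The ratio -/

lemma ratio_nonneg {m : ℕ} {p : ℝ} (hp : 0 ≤ p) (Q : Measure (Fin m → ℝ)) :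
    0 ≤ BUND p Q / OPT m Q :=
  div_nonneg (mul_nonneg hp ENNReal.toReal_nonneg) (OPT_nonneg Q)

lemma ratioVal_nonneg (A : Set (ProbabilityMeasure ℝ)) (m : ℕ) : 0 ≤ ratioVal A m := by
  refine Real.sSup_nonneg ?_
  rintro r ⟨p, hp, rfl⟩
  refine Real.sInf_nonneg ?_
  rintro s ⟨P, -, rfl⟩
  exact ratio_nonneg hp _

/-- Against every bundle price some i.i.d. adversary enforces the ratio `1 - d/(2μ)`. -/
lemma exists_adversary {μ d : ℝ} (hμ : 0 < μ) (hd0 : 0 < d) (hd : d < 2 * μ) {m : ℕ}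
    (hm : 0 < m) {p : ℝ} (hp : 0 ≤ p) :
    ∃ P ∈ MeanMAD2 μ d, BUND p (jointMeasure fun _ : Fin m => P) /
      OPT m (jointMeasure fun _ : Fin m => P) ≤ 1 - d / (2 * μ) := by
  have hm' : (0 : ℝ) < m := by exact_mod_cast hm
  set c : ℝ := 1 - d / (2 * μ) with hc
  have hc0 : 0 < c := by
    rw [hc, sub_pos, div_lt_one (by positivity)]; exact hd
  have hcμ : μ * c = μ - d / 2 := by rw [hc]; field_simp
  have hc1 : c < 1 := by
    have : 0 < d / (2 * μ) := by positivity
    linarith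
  rcases le_or_gt p (m * (μ - d / 2)) with hle | hgt
  · have hβ : d ≤ 2 * μ * (1 - c) := by nlinarith
    have hO := le_OPT_adversary hμ hd0 hc0 hc1 hβ m
    refine ⟨_, adversary_mem hd0 hc0 hc1 hβ, ?_⟩
    have e : (m : ℝ) * (μ * c + d / 2) = m * μ := by rw [hcμ]; ring
    rw [e] at hO
    rw [div_le_iff₀ (lt_of_lt_of_le (by positivity) hO)]
    calc _ ≤ p := BUND_le_price hp _
      _ ≤ c * (m * μ) := by rw [← hcμ] at hle; linarith
      _ ≤ _ := mul_le_mul_of_nonneg_left hO hc0.le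
  · have hp0 : 0 < p := by
      refine lt_of_le_of_lt ?_ hgt
      rw [← hcμ]; positivity
    -- The second bound on `β` is what makes `p m β ≤ c · m d/2`.
    set β : ℝ := min c (c * d / (2 * p)) with hβdef
    have hβ0 : 0 < β := lt_min hc0 (by positivity)
    have hβc : β ≤ c := min_le_left _ _
    have hβ1 : β < 1 := hβc.trans_lt hc1
    have hβp : β * (2 * p) ≤ c * d :=
      (le_div_iff₀ (by positivity)).1 (min_le_right _ _)
    have hβ : d ≤ 2 * μ * (1 - β) := by nlinarith
    have hO := le_OPT_adversary hμ hd0 hβ0 hβ1 hβ m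
    refine ⟨_, adversary_mem hd0 hβ0 hβ1 hβ, ?_⟩
    rw [div_le_iff₀ (lt_of_lt_of_le (by positivity) hO)]
    calc _ ≤ p * (m * β) := BUND_adversary_le hd0 hβ0 hβ1 hp hgt
      _ ≤ c * (m * (d / 2)) := by nlinarith
      _ ≤ c * (m * (μ * β + d / 2)) := by
        have : 0 ≤ μ * β := by positivity
        gcongr
        linarith
      _ ≤ _ := mul_le_mul_of_nonneg_left hO hc0.le

lemma ratioVal_le {μ d : ℝ} (hμ : 0 < μ) (hd0 : 0 < d) (hd : d < 2 * μ) {m : ℕ}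
    (hm : 0 < m) : ratioVal (MeanMAD2 μ d) m ≤ 1 - d / (2 * μ) := by
  unfold ratioVal
  refine csSup_le ⟨_, 0, le_rfl, rfl⟩ ?_
  rintro r ⟨p, hp, rfl⟩
  obtain ⟨P, hP, hle⟩ := exists_adversary hμ hd0 hd hm hp
  refine le_trans (csInf_le ⟨0, ?_⟩ ⟨fun _ => P, fun _ => hP, rfl⟩) hle
  rintro s ⟨P, -, rfl⟩
  exact ratio_nonneg hp _

/-- Lemma 4: the asymptotic robust bundling ratio over two-point distributions is at most
`1 - d/(2μ)`. -/
theorem ratio_twoPoint_upper (μ d : ℝ) (hμ : 0 < μ) (hd0 : 0 < d) (hd : d < 2 * μ) :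
    limsup (fun m : ℕ => ratioVal (MeanMAD2 μ d) m) atTop ≤ 1 - d / (2 * μ) := by
  refine limsup_le_of_le ?_ ?_
  · exact isCoboundedUnder_le_of_le atTop (x := 0) fun m => ratioVal_nonneg _ m
  · filter_upwards [eventually_gt_atTop 0] with m hm
    exact ratioVal_le hμ hd0 hd hm

end
end
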